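/- arXiv:2105.10451 — 7 statements merged into one kernel-verified Lean document; each statement's English description precedes it below -/
import Mathlib

section
/- Let f_0,…,f_d ∈ L. For every nonzero β ∈ L one has Σ_{i=0}^{d} f_i·θ^i(β) = β · Σ_{i=0}^{d} f_i·N_i(θ(β)·β^{-1}). Consequently, a nonzero β ∈ L satisfies Σ_{i=0}^{d} f_i·θ^i(β) = 0 if and only if θ(β)·β^{-1} is a root of the θ-projective polynomial P_F(y) := Σ_{i=0}^{d} f_i·N_i(y); that is, the kernel of the K-linear map β ↦ Σ_i f_i θ^i(β) equals ξ_θ^{-1}(V_L(P_F)) ∪ {0}, where ξ_θ(β) = θ(β)·β^{-1} and V_L(P_F) is the set of roots of P_F in L. -/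
/-!
For `β ≠ 0` the product `N_i(θ(β) β⁻¹) = ∏_{j<i} θ^{j+1}(β) / θ^j(β)` telescopes to `θ^i(β) / β`
(`mul_trunorm_div`). Multiplying by `f_i` and summing gives the identity; since `β` is a unit, the
two sums vanish together, and `β = 0` always lies in the kernel.
-/

noncomputable section

open Finset

variable {K L : Type*} [Field K] [Field L] [Algebra K L]

/-- The `i`-th truncated norm `N_i(y) = ∏_{j=0}^{i-1} θ^j(y)`. -/
def trunorm (θ : L ≃ₐ[K] L) (i : ℕ) (y : L) : L :=
  ∏ j ∈ Finset.range i, (θ ^ j) y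

theorem mul_trunorm_div (θ : L ≃ₐ[K] L) (β : L) (hβ : β ≠ 0) (i : ℕ) :
    β * trunorm θ i (θ β * β⁻¹) = (θ ^ i) β := by
  induction i with
  | zero => simp [trunorm]
  | succ i ih =>
    have h : (θ ^ i) β ≠ 0 := (map_ne_zero (θ ^ i)).mpr hβ
    have h1 : (θ ^ (i + 1)) β = (θ ^ i) (θ β) := by rw [pow_succ]; rfl
    unfold trunorm at ih ⊢
    rw [Finset.prod_range_succ, ← mul_assoc, ih, h1, map_mul, map_inv₀]
    field_simp

theorem stmt_0 (n : ℕ) [IsGalois K L] [FiniteDimensional K L]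
    (hn : Module.finrank K L = n) (θ : L ≃ₐ[K] L)
    (hgen : ∀ σ : L ≃ₐ[K] L, σ ∈ Subgroup.zpowers θ)
    (d : ℕ) (f : ℕ → L) :
    (∀ β : L, β ≠ 0 →
        ∑ i ∈ range (d + 1), f i * (θ ^ i) β
          = β * ∑ i ∈ range (d + 1), f i * trunorm θ i (θ β * β⁻¹)) ∧
      {β : L | ∑ i ∈ range (d + 1), f i * (θ ^ i) β = 0}
        = ((fun β : L => θ β * β⁻¹) ⁻¹'
              {y : L | ∑ i ∈ range (d + 1), f i * trunorm θ i y = 0}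
            ∩ {β : L | β ≠ 0}) ∪ {0} := by
  have key : ∀ β : L, β ≠ 0 →
      ∑ i ∈ range (d + 1), f i * (θ ^ i) β
        = β * ∑ i ∈ range (d + 1), f i * trunorm θ i (θ β * β⁻¹) := by
    intro β hβ
    rw [Finset.mul_sum]
    refine Finset.sum_congr rfl fun i _ => ?_
    rw [← mul_trunorm_div θ β hβ i]
    ring
  refine ⟨key, ?_⟩
  ext β
  by_cases hβ : β = 0
  · simp [hβ]
  · simp only [Set.mem_ofPred_eq, Set.mem_union, Set.mem_inter_iff, Set.mem_preimage,
      Set.mem_singleton_iff]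
    rw [key β hβ]
    simp [hβ]
end
end

section
/- Let f_0,…,f_d ∈ L with f_0 ≠ 0 and let P_F(y) := Σ_{i=0}^{d} f_i·N_i(y). Fix λ ∈ K \ {0} and α ∈ L \ {0} with N_{L/K}(α) = λ. Then {β ∈ L : N_{L/K}(β) = λ and P_F(β) = 0} = {α·θ(μ)·μ^{-1} : μ ∈ L \ {0} and F_α(μ) = 0}. Moreover, for nonzero μ, μ' ∈ ker F_α one has α·θ(μ)·μ^{-1} = α·θ(μ')·μ'^{-1} if and only if μ'·μ^{-1} ∈ K \ {0}; hence the set of roots of P_F of norm λ is in bijection with the projectivization of the K-vector space ker F_α. -/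
/-!
Substituting `β = α θ(μ) μ⁻¹` makes the truncated norms telescope:
`N_i(β) = N_i(α) θ^i(μ) μ⁻¹` (`trunorm_twist`). Hence `P_F(β) = F_α(μ) μ⁻¹`, so roots of `P_F` of
this shape correspond to kernel vectors of `F_α`, and since `θ^n = 1` they have norm `N(α) = λ`.
Conversely, if `N(β) = λ = N(α)` then `α / β` has norm `1`, and Hilbert's Theorem 90
(`exists_eq_mul_of_trunorm_eq_one`) provides `μ` with `μ / θ(μ) = α / β`.
Two vectors `μ` and `ν` give the same `β` exactly when the quotient `ν / μ` is fixed by `θ`, that is, when it lies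
in `K`.
-/

noncomputable section

open Finset

variable {K L : Type*} [Field K] [Field L] [Algebra K L]

/-- The `K`-linear endomorphism `F_α : β ↦ ∑_{i<m} f_i·N_i(α)·θ^i(β)`. -/
def Fmap (θ : L ≃ₐ[K] L) (f : ℕ → L) (m : ℕ) (α : L) : L →ₗ[K] L :=
  ∑ i ∈ Finset.range m, (f i * trunorm θ i α) • (θ ^ i).toLinearMap

theorem trunorm_twist (θ : L ≃ₐ[K] L) (α μ : L) (hμ : μ ≠ 0) (i : ℕ) :
    trunorm θ i (α * θ μ * μ⁻¹) = trunorm θ i α * (θ ^ i) μ * μ⁻¹ := by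
  induction i with
  | zero => simp [trunorm, hμ]
  | succ i ih =>
    have h : (θ ^ i) μ ≠ 0 := (map_ne_zero_iff _ (θ ^ i).injective).2 hμ
    have hs : (θ ^ i) (θ μ) = (θ ^ (i + 1)) μ := by rw [pow_succ]; rfl
    unfold trunorm at ih ⊢
    rw [prod_range_succ, ih, prod_range_succ, map_mul, map_mul, map_inv₀, hs]
    field_simp

theorem Fmap_apply (θ : L ≃ₐ[K] L) (f : ℕ → L) (m : ℕ) (α μ : L) :
    Fmap θ f m α μ = ∑ i ∈ range m, f i * trunorm θ i α * (θ ^ i) μ := by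
  simp [Fmap, LinearMap.sum_apply]

theorem sum_trunorm_twist (θ : L ≃ₐ[K] L) (f : ℕ → L) (m : ℕ) (α μ : L) (hμ : μ ≠ 0) :
    ∑ i ∈ range m, f i * trunorm θ i (α * θ μ * μ⁻¹) = Fmap θ f m α μ * μ⁻¹ := by
  rw [Fmap_apply, sum_mul]
  refine sum_congr rfl fun i _ => ?_
  rw [trunorm_twist θ α μ hμ]
  ring

theorem orderOf_generator [IsGalois K L] [FiniteDimensional K L] (θ : L ≃ₐ[K] L)
    (hgen : ∀ σ : L ≃ₐ[K] L, σ ∈ Subgroup.zpowers θ) : orderOf θ = Module.finrank K L := by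
  rw [orderOf_eq_card_of_forall_mem_zpowers hgen, IsGalois.card_aut_eq_finrank]

/-- The full truncated norm is the field norm, since the powers `θ^j` with `j < [L : K]` run
through the Galois group once. -/
theorem trunorm_finrank [IsGalois K L] [FiniteDimensional K L] (θ : L ≃ₐ[K] L)
    (hgen : ∀ σ : L ≃ₐ[K] L, σ ∈ Subgroup.zpowers θ) (y : L) :
    trunorm θ (Module.finrank K L) y = algebraMap K L (Algebra.norm K y) := by
  classical
  rw [Algebra.norm_eq_prod_automorphisms, trunorm, ← IsGalois.card_aut_eq_finrank K L,
    ← IsCyclic.image_range_card hgen, prod_image]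
  intro i hi j hj hij
  have ho := orderOf_eq_card_of_forall_mem_zpowers hgen
  rw [← ho] at hi hj
  exact pow_injOn_Iio_orderOf (by simpa using hi) (by simpa using hj) hij

/-- Hilbert's Theorem 90 for a cyclic extension, with `K` and `L` in arbitrary universes. For a
suitable `z`, the Lagrange resolvent `μ = ∑_{i<n} N_i(c) θ^i(z)` is nonzero by independence of the
characters `θ^i`, and `c θ(μ) = μ` because the sum shifts cyclically when `N_n(c) = 1`. -/
theorem exists_eq_mul_of_trunorm_eq_one [IsGalois K L] [FiniteDimensional K L] (θ : L ≃ₐ[K] L)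
    (hgen : ∀ σ : L ≃ₐ[K] L, σ ∈ Subgroup.zpowers θ) (c : L)
    (hc : trunorm θ (Module.finrank K L) c = 1) : ∃ μ : L, μ ≠ 0 ∧ μ = c * θ μ := by
  have ho := orderOf_generator θ hgen
  set n := Module.finrank K L with hn
  have hpos : 0 < n := Module.finrank_pos
  have hindep : LinearIndependent L (fun i : Fin n => ((θ ^ (i : ℕ) : L ≃ₐ[K] L) : L → L)) := by
    refine (linearIndependent_monoidHom L L).comp
      (fun i : Fin n => ((θ ^ (i : ℕ) : L ≃ₐ[K] L) : L →* L)) fun i j hij => ?_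
    have hp : θ ^ (i : ℕ) = θ ^ (j : ℕ) := AlgEquiv.ext fun x => DFunLike.congr_fun hij x
    exact Fin.ext (pow_injOn_Iio_orderOf (by simp [ho]) (by simp [ho]) hp)
  obtain ⟨z, hz⟩ : ∃ z : L, ∑ i ∈ range n, trunorm θ i c * (θ ^ i) z ≠ 0 := by
    by_contra! hzero
    have h0 := Fintype.linearIndependent_iff.1 hindep (fun i => trunorm θ i c) (by
      ext z
      have hz := hzero z
      rw [Finset.sum_range] at hz
      simpa [Finset.sum_apply] using hz) ⟨0, hpos⟩
    simp [trunorm] at h0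
  refine ⟨_, hz, ?_⟩
  have hshift : ∀ i, c * θ (trunorm θ i c * (θ ^ i) z)
      = trunorm θ (i + 1) c * (θ ^ (i + 1)) z := by
    intro i
    have hcomp : ∀ (j : ℕ) (x : L), θ ((θ ^ j) x) = (θ ^ (j + 1)) x := fun j x => by
      rw [pow_succ']; rfl
    simp only [trunorm, map_mul, map_prod, hcomp]
    rw [prod_range_succ' _ i, pow_zero, AlgEquiv.one_apply]
    ring
  rw [map_sum, mul_sum, sum_congr rfl fun i _ => hshift i]
  -- The shifted sum trades the term `i = 0` for the term `i = n`, and both equal `z`.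
  have hs := (sum_range_succ (fun i => trunorm θ i c * (θ ^ i) z) n).symm.trans
    (sum_range_succ' (fun i => trunorm θ i c * (θ ^ i) z) n)
  have hθn : θ ^ n = 1 := ho ▸ pow_orderOf_eq_one θ
  have h0 : trunorm θ 0 c = 1 := by simp [trunorm]
  simp only [hc, hθn, h0, pow_zero] at hs
  exact add_right_cancel hs

theorem mem_range_of_generator_fixed [IsGalois K L] [FiniteDimensional K L] (θ : L ≃ₐ[K] L)
    (hgen : ∀ σ : L ≃ₐ[K] L, σ ∈ Subgroup.zpowers θ) (x : L) (hx : θ x = x) :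
    ∃ c : K, algebraMap K L c = x := by
  refine (IsGalois.mem_range_algebraMap_iff_fixed x).2 fun σ => ?_
  have hle : Subgroup.zpowers θ ≤ MulAction.stabilizer (L ≃ₐ[K] L) x := by
    rw [Subgroup.zpowers_le]
    exact hx
  exact hle (hgen σ)

theorem stmt_2 (n : ℕ) [IsGalois K L] [FiniteDimensional K L]
    (hn : Module.finrank K L = n) (θ : L ≃ₐ[K] L)
    (hgen : ∀ σ : L ≃ₐ[K] L, σ ∈ Subgroup.zpowers θ)
    (d : ℕ) (f : ℕ → L) (hf0 : f 0 ≠ 0)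
    (lam : K) (hlam : lam ≠ 0) (α : L) (hα : α ≠ 0)
    (hNα : trunorm θ n α = algebraMap K L lam) :
    ({β : L | trunorm θ n β = algebraMap K L lam ∧
          ∑ i ∈ range (d + 1), f i * trunorm θ i β = 0}
        = {x : L | ∃ μ : L, μ ≠ 0 ∧ Fmap θ f (d + 1) α μ = 0 ∧ x = α * θ μ * μ⁻¹}) ∧
      ∀ μ μ' : L, μ ≠ 0 → μ' ≠ 0 →
        Fmap θ f (d + 1) α μ = 0 → Fmap θ f (d + 1) α μ' = 0 →
        (α * θ μ * μ⁻¹ = α * θ μ' * μ'⁻¹ ↔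
          ∃ c : K, c ≠ 0 ∧ μ' * μ⁻¹ = algebraMap K L c) := by
  subst hn
  refine ⟨?_, ?_⟩
  · ext β
    simp only [Set.mem_ofPred_eq]
    constructor
    · rintro ⟨hN, hP⟩
      have hnorm : ∀ y : L, trunorm θ (Module.finrank K L) y = algebraMap K L lam →
          Algebra.norm K y = lam := fun y hy =>
        (algebraMap K L).injective ((trunorm_finrank θ hgen y).symm.trans hy)
      have hβ : β ≠ 0 := by
        rintro rfl
        exact hlam (by rw [← hnorm 0 hN, Algebra.norm_zero])
      have h1 : Algebra.norm K (α * β⁻¹) = 1 := by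
        rw [map_mul, Algebra.norm_inv, hnorm α hNα, hnorm β hN, mul_inv_cancel₀ hlam]
      obtain ⟨μ, hμ0, hμ⟩ := exists_eq_mul_of_trunorm_eq_one θ hgen (α * β⁻¹)
        (by rw [trunorm_finrank θ hgen, h1, map_one])
      have hx : β = α * θ μ * μ⁻¹ := by
        field_simp at hμ ⊢
        linear_combination hμ
      refine ⟨μ, hμ0, ?_, hx⟩
      rw [hx, sum_trunorm_twist θ f _ α _ hμ0] at hP
      exact (mul_eq_zero.1 hP).resolve_right (inv_ne_zero hμ0)
    · rintro ⟨μ, hμ, hF, rfl⟩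
      refine ⟨?_, by rw [sum_trunorm_twist θ f _ α μ hμ, hF, zero_mul]⟩
      rw [trunorm_twist θ α μ hμ, ← orderOf_generator θ hgen, pow_orderOf_eq_one,
        orderOf_generator θ hgen, hNα, AlgEquiv.one_apply, mul_inv_cancel_right₀ hμ]
  · intro μ μ' hμ hμ' _ _
    have hθμ : θ μ ≠ 0 := by simpa using hμ
    constructor
    · intro h
      have hfix : θ (μ' * μ⁻¹) = μ' * μ⁻¹ := by
        rw [mul_assoc, mul_assoc] at h
        have h' := mul_left_cancel₀ hα h
        rw [map_mul, map_inv₀]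
        field_simp at h' ⊢
        linear_combination -h'
      obtain ⟨c, hc⟩ := mem_range_of_generator_fixed θ hgen _ hfix
      refine ⟨c, ?_, hc.symm⟩
      rintro rfl
      rw [map_zero] at hc
      exact mul_ne_zero hμ' (inv_ne_zero hμ) hc.symm
    · rintro ⟨c, hc, h⟩
      have hc' : algebraMap K L c ≠ 0 := by simpa using hc
      have hμ'eq : μ' = algebraMap K L c * μ := by rw [← h, inv_mul_cancel_right₀ hμ]
      rw [hμ'eq, map_mul, AlgEquiv.commutes]
      field_simp
end
end

section
/- Let f_0,…,f_d ∈ L with d ≥ 1 and f_d ≠ 0. Then for every α ∈ L \ {0}, the K-dimension of the kernel of F_α equals the L-dimension of the kernel of the L-linear endomorphism of L^d given by the matrix A_F − N_{L/K}(α)·I_d. -/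
/-!
Write `C` for the companion matrix and let `ψ v = θ⁻¹(α⁻¹ • Cᵀ v)`, a `θ⁻¹`-semilinear map on `L^d`.
Sending `β` to the vector `(N_i(α) θ^i(β))_{i<d}` identifies `ker F_α` with the fixed points of `ψ`:
the first `d - 1` coordinates of `Cᵀ v = α θ(v)` say that `v` has this shape, and the last one says
that `F_α(β) = 0` (`mem_map_ker_iff`).  The iterate `ψ^n` is the `L`-linear map
`N(α)⁻¹ • A_Fᵀ` (`theta_iterate`), so its fixed space is `ker (A_Fᵀ - N(α))`, which has the same
dimension as `ker (A_F - N(α))`.  On that space `ψ` has order dividing `n`, hence defines a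
semilinear action of the Galois group, and Galois descent (`finrank_descent`) says that the
`K`-dimension of the fixed points of `ψ` is the `L`-dimension of the fixed points of `ψ^n`.
Both halves of descent come from applying the trace `∑_{i<n} ψ^i` and Dedekind's independence of
characters (`dedekind_zero`).
-/

noncomputable section

open Finset

variable {K L : Type*} [Field K] [Field L] [Algebra K L]

/-- The companion matrix `C_F` of `F = f_0 + ⋯ + f_d X^d` (with `f_d ≠ 0`):
`(C_F)_{i+1,i} = 1` and the last column is `-f_{i}/f_d` (0-indexed). -/
def compMat (f : ℕ → L) (d : ℕ) : Matrix (Fin d) (Fin d) L :=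
  Matrix.of fun i j =>
    if (i : ℕ) = (j : ℕ) + 1 then 1
    else if (j : ℕ) = d - 1 then -f (i : ℕ) / f d else 0

/-- `A_F := C_F · θ(C_F) · ⋯ · θ^{n-1}(C_F)`, where `θ` acts entrywise. -/
def AF (θ : L ≃ₐ[K] L) (f : ℕ → L) (d n : ℕ) : Matrix (Fin d) (Fin d) L :=
  ((List.range n).map fun t => (compMat f d).map ⇑(θ ^ t)).prod

/-- Dedekind independence of `1, σ, …, σ^(n-1)`, in the form used for descent. -/
lemma dedekind_zero [IsGalois K L] [FiniteDimensional K L] {n : ℕ}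
    (hn : Module.finrank K L = n) (σ : L ≃ₐ[K] L)
    (hgen : ∀ τ : L ≃ₐ[K] L, τ ∈ Subgroup.zpowers σ) (x : ℕ → L)
    (h : ∀ c : L, ∑ i ∈ Finset.range n, (σ ^ i) c * x i = 0) : x 0 = 0 := by
  have hord : orderOf σ = n := by
    rw [orderOf_eq_card_of_forall_mem_zpowers hgen, IsGalois.card_aut_eq_finrank, hn]
  have hn0 : 0 < n := hn ▸ Module.finrank_pos
  have hli := (linearIndependent_monoidHom L L).comp
    (fun i : Fin n => (((σ ^ (i : ℕ) : L ≃ₐ[K] L) : L →* L))) (by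
      intro i j hij
      have h1 : σ ^ (i : ℕ) = σ ^ (j : ℕ) := by
        ext c
        exact DFunLike.congr_fun hij c
      exact Fin.ext (pow_injOn_Iio_orderOf (by simp [hord]) (by simp [hord]) h1))
  rw [Fintype.linearIndependent_iff] at hli
  refine hli (fun i => x i) ?_ ⟨0, hn0⟩
  ext c
  have := h c
  rw [Finset.sum_range] at this
  simpa [Finset.sum_apply, mul_comm] using this

/-- Galois descent for a cyclic group, with the semilinear action given by the additive map `ψ`
on the subspace `W` where `ψ^n` is the identity. -/
lemma finrank_descent [IsGalois K L] [FiniteDimensional K L] {n : ℕ}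
    (hn : Module.finrank K L = n) (σ : L ≃ₐ[K] L)
    (hgen : ∀ τ : L ≃ₐ[K] L, τ ∈ Subgroup.zpowers σ)
    {V : Type*} [AddCommGroup V] [Module K V] [Module L V] [IsScalarTower K L V]
    [FiniteDimensional L V] (ψ : V →+ V) (hψ : ∀ (c : L) (v : V), ψ (c • v) = σ c • ψ v)
    (W : Submodule L V) (hW : ∀ v, v ∈ W ↔ ψ^[n] v = v)
    (U : Submodule K V) (hU : ∀ v, v ∈ U ↔ ψ v = v) :
    Module.finrank K U = Module.finrank L W := by
  have : FiniteDimensional K V := FiniteDimensional.trans K L V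
  have hit : ∀ (i : ℕ) (c : L) (v : V), ψ^[i] (c • v) = (σ ^ i) c • ψ^[i] v := by
    intro i
    induction i with
    | zero => intro c v; simp
    | succ i ih => intro c v; rw [Function.iterate_succ_apply', ih, hψ,
        Function.iterate_succ_apply', pow_succ']; rfl
  have hitU : ∀ (i : ℕ) (v : V), v ∈ U → ψ^[i] v = v := fun i v hv =>
    Function.iterate_fixed ((hU v).1 hv) i
  have hits : ∀ (i : ℕ) {m : ℕ} (g : Fin m → V), ψ^[i] (∑ l, g l) = ∑ l, ψ^[i] (g l) := by
    intro i m
    induction i with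
    | zero => intro g; rfl
    | succ i ih => intro g; simp only [Function.iterate_succ_apply, map_sum, ih]
  have hσn : σ ^ n = 1 := by
    rw [← hn, ← IsGalois.card_aut_eq_finrank]; exact pow_card_eq_one'
  -- the trace of an element of `L` lies in `K`
  have htr : ∀ a : L, ∃ k : K, algebraMap K L k = ∑ i ∈ Finset.range n, (σ ^ i) a := by
    intro a
    have h1 : σ (∑ i ∈ Finset.range n, (σ ^ i) a) = ∑ i ∈ Finset.range n, (σ ^ i) a := by
      have h2 : ∀ i, σ ((σ ^ i) a) = (σ ^ (i + 1)) a := fun i => by rw [pow_succ']; rfl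
      rw [map_sum, Finset.sum_congr rfl (fun i _ => h2 i)]
      have := Finset.sum_range_succ' (fun i => (σ ^ i) a) n
      rw [Finset.sum_range_succ, hσn, pow_zero] at this
      exact (add_right_cancel this).symm
    refine (IsGalois.mem_range_algebraMap_iff_fixed (F := K) _).2 fun τ => ?_
    have h3 : Subgroup.zpowers σ ≤ MulAction.stabilizer (L ≃ₐ[K] L)
        (∑ i ∈ Finset.range n, (σ ^ i) a) := by
      rw [Subgroup.zpowers_le]; exact h1
    exact h3 (hgen τ)
  let b := Module.finBasis K U
  have hli : LinearIndependent L (fun i => (b i : V)) := by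
    rw [Fintype.linearIndependent_iff]
    intro c hc j
    -- multiply the relation by `a` and take traces: this gives a relation over `K`
    have key : ∀ a : L, ∑ i ∈ Finset.range n, (σ ^ i) (a * c j) = 0 := by
      intro a
      choose k hk using fun l => htr (a * c l)
      have h0 : ∑ l, k l • (b l : V) = 0 := by
        have h1 : ∀ i : ℕ, ∑ l, (σ ^ i) (a * c l) • (b l : V) = 0 := by
          intro i
          have h2 : (ψ^[i]) (∑ l, (a * c l) • (b l : V)) = 0 := by
            have : ∑ l, (a * c l) • (b l : V) = 0 := by
              simp_rw [mul_smul]; rw [← Finset.smul_sum, hc, smul_zero]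
            rw [this, iterate_map_zero]
          rw [hits] at h2
          rw [← h2]
          refine Finset.sum_congr rfl fun l _ => ?_
          rw [hit, hitU i _ (b l).2]
        have h3 : ∑ i ∈ Finset.range n, ∑ l, (σ ^ i) (a * c l) • (b l : V) = 0 :=
          Finset.sum_eq_zero fun i _ => h1 i
        rw [Finset.sum_comm] at h3
        rw [← h3]
        refine Finset.sum_congr rfl fun l _ => ?_
        rw [← Finset.sum_smul, ← hk, algebraMap_smul]
      have h4 : ∑ l, k l • b l = 0 := by
        apply Subtype.ext
        simpa using h0
      have h5 := Fintype.linearIndependent_iff.1 b.linearIndependent k h4 j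
      rw [← hk, h5, map_zero]
    have := dedekind_zero hn σ hgen (fun i => (σ ^ i) (c j)) (by
      intro a; simpa using key a)
    simpa using this
  have hspan : Submodule.span L (Set.range fun i => (b i : V)) = W := by
    have hbU : ∀ v ∈ U, v ∈ Submodule.span L (Set.range fun i => (b i : V)) := by
      intro v hv
      have h1 := b.sum_repr ⟨v, hv⟩
      have h2 : v = ∑ i, (b.repr ⟨v, hv⟩ i) • (b i : V) := by
        have h3 := (congrArg U.subtype h1).symm
        rw [map_sum] at h3
        exact h3
      rw [h2]
      refine Submodule.sum_mem _ fun i _ => ?_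
      rw [← algebraMap_smul L]
      exact Submodule.smul_mem _ _ (Submodule.subset_span ⟨i, rfl⟩)
    apply le_antisymm
    · rw [Submodule.span_le]
      rintro _ ⟨i, rfl⟩
      exact (hW _).2 (hitU n _ (b i).2)
    · intro w hw
      by_contra hcon
      -- a functional killing `U` kills every trace `∑ ψ^i (c • w)`, so it kills `w`
      obtain ⟨g, hg, hle⟩ := Submodule.exists_le_ker_of_notMem hcon
      refine hg ?_
      have := dedekind_zero hn σ hgen (fun i => g (ψ^[i] w)) (by
        intro c
        have hT : ∑ i ∈ Finset.range n, ψ^[i] (c • w) ∈ U := by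
          rw [hU, map_sum]
          have h2 : ∀ i, ψ (ψ^[i] (c • w)) = ψ^[i + 1] (c • w) := fun i =>
            (Function.iterate_succ_apply' _ _ _).symm
          rw [Finset.sum_congr rfl (fun i _ => h2 i)]
          have := Finset.sum_range_succ' (fun i => ψ^[i] (c • w)) n
          rw [Finset.sum_range_succ, (hW _).1 (W.smul_mem c hw)] at this
          exact (add_right_cancel this).symm
        have h3 : g (∑ i ∈ Finset.range n, ψ^[i] (c • w)) = 0 := hle (hbU _ hT)
        rw [map_sum] at h3
        rw [← h3]
        refine Finset.sum_congr rfl fun i _ => ?_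
        rw [hit, map_smul, smul_eq_mul])
      simpa using this
  rw [Module.finrank_eq_card_basis b, ← hspan, finrank_span_eq_card hli]

/-- The `θ⁻¹`-semilinear map `v ↦ θ⁻¹(α⁻¹ • Cᵀ v)` on `L^d`, where `C` is the companion matrix. -/
def psi (θ : L ≃ₐ[K] L) (f : ℕ → L) (d : ℕ) (α : L) : (Fin d → L) →+ (Fin d → L) where
  toFun v := fun j => θ⁻¹ (α⁻¹ * ((compMat f d).transpose.mulVec v) j)
  map_zero' := by ext; simp
  map_add' v w := by ext; simp [Matrix.mulVec_add, mul_add]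

lemma psi_smul (θ : L ≃ₐ[K] L) (f : ℕ → L) (d : ℕ) (α : L) (c : L) (v : Fin d → L) :
    psi θ f d α (c • v) = θ⁻¹ c • psi θ f d α v := by
  ext j
  simp only [psi, AddMonoidHom.coe_mk, ZeroHom.coe_mk, Matrix.mulVec_smul, Pi.smul_apply,
    smul_eq_mul, ← map_mul]
  congr 1
  ring

lemma theta_psi (θ : L ≃ₐ[K] L) (f : ℕ → L) (d : ℕ) (α : L) (v : Fin d → L) (j : Fin d) :
    θ (psi θ f d α v j) = α⁻¹ * ((compMat f d).transpose.mulVec v) j :=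
  AlgEquiv.apply_symm_apply θ _

/-- After untwisting by `θ^m`, the iterate `ψ^m` is the matrix `N_m(α)⁻¹ (C θ(C) ⋯ θ^(m-1)(C))ᵀ`. -/
lemma theta_iterate (θ : L ≃ₐ[K] L) (f : ℕ → L) (d : ℕ) (α : L) (v : Fin d → L) (m : ℕ) :
    (fun j => (θ ^ m) ((psi θ f d α)^[m] v j))
      = (trunorm θ m α)⁻¹ • (AF θ f d m).transpose.mulVec v := by
  induction m with
  | zero => simp [trunorm, AF]
  | succ m ih =>
    have hA : AF θ f d (m + 1) = AF θ f d m * (compMat f d).map ⇑(θ ^ m) := by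
      simp [AF, List.range_succ]
    have hN : trunorm θ (m + 1) α = trunorm θ m α * (θ ^ m) α := by
      simp [trunorm, Finset.prod_range_succ]
    rw [hA, hN, Matrix.transpose_mul, ← Matrix.mulVec_mulVec, mul_inv, mul_comm, mul_smul,
      ← Matrix.mulVec_smul, ← ih]
    ext j
    rw [Function.iterate_succ_apply', pow_succ, AlgEquiv.mul_apply, theta_psi]
    generalize θ ^ m = τ
    simp [Matrix.mulVec, dotProduct]

/-- The embedding `β ↦ (N_i(α) θ^i(β))_{i<d}`. -/
def emb (θ : L ≃ₐ[K] L) (d : ℕ) (α : L) : L →ₗ[K] (Fin d → L) :=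
  LinearMap.pi fun i => (trunorm θ i α) • (θ ^ (i : ℕ)).toLinearMap

lemma emb_apply (θ : L ≃ₐ[K] L) (d : ℕ) (α β : L) (i : Fin d) :
    emb θ d α β i = trunorm θ i α * (θ ^ (i : ℕ)) β := rfl

lemma trunorm_step (θ : L ≃ₐ[K] L) (α β : L) (i : ℕ) :
    α * θ (trunorm θ i α * (θ ^ i) β) = trunorm θ (i + 1) α * (θ ^ (i + 1)) β := by
  have h : ∀ j x, θ ((θ ^ j) x) = (θ ^ (j + 1)) x := fun j x => by rw [pow_succ']; rfl
  simp only [trunorm, map_mul, map_prod, h, Finset.prod_range_succ']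
  simp only [pow_zero, AlgEquiv.one_apply]
  ring

lemma mulVec_lt (f : ℕ → L) (d : ℕ) (v : Fin d → L) (j : ℕ) (hj : j + 1 < d) :
    ((compMat f d).transpose.mulVec v) ⟨j, by omega⟩ = v ⟨j + 1, hj⟩ := by
  simp only [Matrix.mulVec, dotProduct, Matrix.transpose_apply, compMat, Matrix.of_apply]
  rw [Finset.sum_eq_single ⟨j + 1, hj⟩]
  · simp
  · intro i _ hi
    have h1 : (i : ℕ) ≠ j + 1 := fun h => hi (Fin.ext h)
    have h2 : j ≠ d - 1 := by omega
    simp [h1, h2]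
  · simp

lemma mulVec_last (f : ℕ → L) (d : ℕ) (v : Fin d → L) (hd : d - 1 < d) :
    ((compMat f d).transpose.mulVec v) ⟨d - 1, hd⟩ = -(∑ i : Fin d, f i * v i) / f d := by
  simp only [Matrix.mulVec, dotProduct, Matrix.transpose_apply, compMat, Matrix.of_apply]
  rw [neg_div, Finset.sum_div, ← Finset.sum_neg_distrib]
  refine Finset.sum_congr rfl fun i _ => ?_
  have h1 : (i : ℕ) ≠ d - 1 + 1 := by have := i.2; omega
  rw [if_neg h1, if_pos trivial]
  ring

lemma psi_fixed_iff (θ : L ≃ₐ[K] L) (f : ℕ → L) (d : ℕ) (α : L) (hα : α ≠ 0)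
    (v : Fin d → L) : psi θ f d α v = v ↔
      ∀ j, ((compMat f d).transpose.mulVec v) j = α * θ (v j) := by
  rw [funext_iff]
  refine forall_congr' fun j => ?_
  rw [← θ.injective.eq_iff, theta_psi, inv_mul_eq_iff_eq_mul₀ hα]

/-- The fixed points of `ψ` are the images of the elements of `ker F_α`. -/
lemma mem_map_ker_iff (θ : L ≃ₐ[K] L) (f : ℕ → L) (d : ℕ) (hd : 1 ≤ d) (hfd : f d ≠ 0)
    (α : L) (hα : α ≠ 0) (v : Fin d → L) :
    v ∈ (LinearMap.ker (Fmap θ f (d + 1) α)).map (emb θ d α) ↔ psi θ f d α v = v := by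
  have hF : ∀ β, Fmap θ f (d + 1) α β
      = ∑ i : Fin d, f i * emb θ d α β i + f d * (trunorm θ d α * (θ ^ d) β) := by
    intro β
    simp [Fmap, Finset.sum_range_succ, Finset.sum_range, emb_apply, mul_assoc,
      LinearMap.sum_apply]
  have hd1 : d - 1 < d := by omega
  -- the last coordinate of the fixed point equation is `F_α(β) = 0`
  have hlast : ∀ β, ((compMat f d).transpose.mulVec (emb θ d α β)) ⟨d - 1, hd1⟩
      = α * θ (emb θ d α β ⟨d - 1, hd1⟩) ↔ Fmap θ f (d + 1) α β = 0 := by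
    intro β
    rw [mulVec_last, emb_apply, trunorm_step, hF, div_eq_iff hfd]
    simp only [Nat.sub_add_cancel hd]
    constructor
    · intro h; linear_combination -h
    · intro h; linear_combination -h
  rw [psi_fixed_iff θ f d α hα]
  constructor
  · rintro ⟨β, hβ, rfl⟩ ⟨j, hj⟩
    by_cases hj1 : j + 1 < d
    · rw [mulVec_lt f d _ j hj1, emb_apply, emb_apply, trunorm_step]
    · obtain rfl : j = d - 1 := by omega
      exact (hlast β).2 hβ
  · intro h
    have hv : emb θ d α (v ⟨0, hd⟩) = v := by
      have : ∀ i (hi : i < d), emb θ d α (v ⟨0, hd⟩) ⟨i, hi⟩ = v ⟨i, hi⟩ := by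
        intro i
        induction i with
        | zero => intro hi; simp [emb_apply, trunorm]
        | succ i ih =>
          intro hi
          have h1 := h ⟨i, by omega⟩
          rw [mulVec_lt f d v i hi, ← ih (by omega), emb_apply, trunorm_step] at h1
          rw [h1, emb_apply]
      ext i
      exact this i i.2
    refine ⟨v ⟨0, hd⟩, ?_, hv⟩
    have h2 := h ⟨d - 1, hd1⟩
    rw [← hv] at h2
    exact (hlast _).1 h2

lemma finrank_ker_transpose {d : ℕ} (M : Matrix (Fin d) (Fin d) L) :
    Module.finrank L (LinearMap.ker M.mulVecLin)
      = Module.finrank L (LinearMap.ker M.transpose.mulVecLin) := by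
  have h1 := M.mulVecLin.finrank_range_add_finrank_ker
  have h2 := M.transpose.mulVecLin.finrank_range_add_finrank_ker
  have h3 : Module.finrank L (LinearMap.range M.transpose.mulVecLin)
    = Module.finrank L (LinearMap.range M.mulVecLin) := M.rank_transpose
  omega

theorem stmt_3 (n : ℕ) [IsGalois K L] [FiniteDimensional K L]
    (hn : Module.finrank K L = n) (θ : L ≃ₐ[K] L)
    (hgen : ∀ σ : L ≃ₐ[K] L, σ ∈ Subgroup.zpowers θ)
    (d : ℕ) (hd : 1 ≤ d) (f : ℕ → L) (hfd : f d ≠ 0)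
    (α : L) (hα : α ≠ 0) :
    Module.finrank K ↥(LinearMap.ker (Fmap θ f (d + 1) α))
      = Module.finrank L
          ↥(LinearMap.ker (Matrix.mulVecLin (AF θ f d n - trunorm θ n α • 1))) := by
  have hinj : Function.Injective (emb θ d α) := by
    intro x y hxy
    simpa [emb_apply, trunorm] using congrFun hxy ⟨0, hd⟩
  have hθn : θ ^ n = 1 := by
    rw [← hn, ← IsGalois.card_aut_eq_finrank]; exact pow_card_eq_one'
  have hN : trunorm θ n α ≠ 0 :=
    Finset.prod_ne_zero_iff.2 fun j _ => (map_ne_zero_iff _ (θ ^ j).injective).2 hα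
  rw [(Submodule.equivMapOfInjective _ hinj _).finrank_eq, finrank_ker_transpose]
  refine finrank_descent hn θ⁻¹ (by simpa using hgen) (psi θ f d α) (psi_smul θ f d α) _ ?_ _
    (mem_map_ker_iff θ f d hd hfd α hα)
  intro v
  have h := theta_iterate θ f d α v n
  rw [hθn] at h
  have h' : (psi θ f d α)^[n] v = (trunorm θ n α)⁻¹ • (AF θ f d n).transpose.mulVec v := h
  rw [h', LinearMap.mem_ker, Matrix.mulVecLin_apply, Matrix.transpose_sub, Matrix.transpose_smul,
    Matrix.transpose_one, Matrix.sub_mulVec, Matrix.smul_mulVec, Matrix.one_mulVec, sub_eq_zero,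
    inv_smul_eq_iff₀ hN]
end
end

section
/- Let ℓ ≥ 1 and let α_1,…,α_ℓ ∈ L \ {0} have pairwise distinct norms N_{L/K}(α_j). Then the map Φ from L^{ℓn} to the ℓ-fold product of End_K(L), sending a coefficient tuple f = (f_0,…,f_{ℓn−1}) to (F_{α_1},…,F_{α_ℓ}), where F_α(β) := Σ_{i=0}^{ℓn−1} f_i·N_i(α)·θ^i(β), is a bijective L-linear map (L acts on End_K(L) by (c·g)(β) := c·g(β)). -/
/-!
Write `i = a + n * b` with `a < n` and `b < ℓ`. Since `θ ^ n = 1`, the truncated norm factors as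
`N_i(α) = N_n(α) ^ b * N_a(α)` and `θ ^ i = θ ^ a`, so
`F_α = ∑_a N_a(α) (∑_b f_{a + n b} N_n(α) ^ b) θ ^ a`.
If `F_{α_j} = 0` for all `j`, Dedekind's independence of the automorphisms `θ ^ a` makes each inner
sum vanish at the `ℓ` distinct points `N_n(α_j)`, and the Vandermonde determinant forces `f = 0`
(`PhiMap_eq_zero`). Both sides have `L`-dimension `ℓ * n`, so the injective `L`-linear map `Φ` is
bijective.
-/

noncomputable section

open Finset

variable {K L : Type*} [Field K] [Field L] [Algebra K L]

/-- The map `Φ` sending a coefficient tuple `f ∈ L^{ℓn}` to the tuple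
`(F_{α_1}, …, F_{α_ℓ})`, where `F_α(β) = ∑_{i<ℓn} f_i·N_i(α)·θ^i(β)`. -/
def PhiMap (n ℓ : ℕ) (θ : L ≃ₐ[K] L) (α : Fin ℓ → L) (f : Fin (ℓ * n) → L) :
    Fin ℓ → L →ₗ[K] L :=
  fun j => ∑ i : Fin (ℓ * n), (f i * trunorm θ (i : ℕ) (α j)) • (θ ^ (i : ℕ)).toLinearMap

theorem trunorm_add_mul {n : ℕ} {θ : L ≃ₐ[K] L} (hθ : θ ^ n = 1) (a b : ℕ) (y : L) :
    trunorm θ (a + n * b) y = trunorm θ n y ^ b * trunorm θ a y := by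
  have hper : ∀ m : ℕ, trunorm θ (n + m) y = trunorm θ n y * trunorm θ m y := by
    intro m
    simp only [trunorm, Finset.prod_range_add, pow_add, hθ, one_mul]
  induction b with
  | zero => simp
  | succ b ih =>
    rw [show a + n * (b + 1) = n + (a + n * b) by ring, hper, ih]
    ring

theorem trunorm_ne_zero (θ : L ≃ₐ[K] L) (i : ℕ) {y : L} (hy : y ≠ 0) : trunorm θ i y ≠ 0 :=
  Finset.prod_ne_zero_iff.mpr fun j _ => (map_ne_zero_iff _ (θ ^ j).injective).mpr hy

/-- Dedekind's independence of characters, for the distinct powers of `θ`. -/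
theorem eq_zero_of_sum_smul_pow_eq_zero {n : ℕ} {θ : L ≃ₐ[K] L} (hθ : orderOf θ = n)
    {g : Fin n → L} (hg : ∑ a : Fin n, g a • (θ ^ (a : ℕ)).toLinearMap = 0) (a : Fin n) :
    g a = 0 := by
  have hinj : Function.Injective
      fun a : Fin n => ((θ ^ (a : ℕ) : L ≃ₐ[K] L) : L →* L) := by
    intro a b hab
    have h : θ ^ (a : ℕ) = θ ^ (b : ℕ) := AlgEquiv.ext fun x => DFunLike.congr_fun hab x
    exact Fin.ext (pow_injOn_Iio_orderOf (by simp [hθ]) (by simp [hθ]) h)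
  have hli := (linearIndependent_monoidHom L L).comp _ hinj
  refine Fintype.linearIndependent_iff.mp hli g (funext fun x => ?_) a
  simpa using DFunLike.congr_fun hg x

/-- The grouping of `F_{α_j}` by powers of `θ`, along `i = a + n * b`. -/
theorem PhiMap_eq_sum {n ℓ : ℕ} {θ : L ≃ₐ[K] L} (hθ : θ ^ n = 1) (α : Fin ℓ → L)
    (f : Fin (ℓ * n) → L) (j : Fin ℓ) :
    PhiMap n ℓ θ α f j = ∑ a : Fin n,
      ((∑ b : Fin ℓ, f (finProdFinEquiv (b, a)) * trunorm θ n (α j) ^ (b : ℕ)) *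
        trunorm θ a (α j)) • (θ ^ (a : ℕ)).toLinearMap := by
  rw [PhiMap, ← finProdFinEquiv.sum_comp, Fintype.sum_prod_type_right]
  refine Finset.sum_congr rfl fun a _ => ?_
  rw [Finset.sum_mul, Finset.sum_smul]
  refine Finset.sum_congr rfl fun b _ => ?_
  simp only [finProdFinEquiv_apply_val, trunorm_add_mul hθ, pow_add, pow_mul, hθ, one_pow,
    mul_one, mul_assoc]

theorem PhiMap_eq_zero {n ℓ : ℕ} {θ : L ≃ₐ[K] L} (hθ : orderOf θ = n) {α : Fin ℓ → L}
    (hα0 : ∀ j, α j ≠ 0) (hdist : Function.Injective fun j => trunorm θ n (α j))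
    {f : Fin (ℓ * n) → L} (hf : PhiMap n ℓ θ α f = 0) : f = 0 := by
  have hpow : θ ^ n = 1 := hθ ▸ pow_orderOf_eq_one θ
  have hsum : ∀ (a : Fin n) (j : Fin ℓ),
      ∑ b : Fin ℓ, f (finProdFinEquiv (b, a)) * trunorm θ n (α j) ^ (b : ℕ) = 0 := by
    intro a j
    have hj : PhiMap n ℓ θ α f j = 0 := congrFun hf j
    rw [PhiMap_eq_sum hpow] at hj
    have ha := eq_zero_of_sum_smul_pow_eq_zero hθ hj a
    exact (mul_eq_zero.mp ha).resolve_right (trunorm_ne_zero θ a (hα0 j))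
  funext i
  obtain ⟨⟨b, a⟩, rfl⟩ := finProdFinEquiv.surjective i
  exact congrFun (Matrix.eq_zero_of_forall_index_sum_mul_pow_eq_zero hdist (hsum a)) b

theorem stmt_6 (n ℓ : ℕ) [IsGalois K L] [FiniteDimensional K L]
    (hn : Module.finrank K L = n) (θ : L ≃ₐ[K] L)
    (hgen : ∀ σ : L ≃ₐ[K] L, σ ∈ Subgroup.zpowers θ)
    (hl : 1 ≤ ℓ) (α : Fin ℓ → L) (hα0 : ∀ j, α j ≠ 0)
    (hdist : Function.Injective fun j => trunorm θ n (α j)) :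
    Function.Bijective (PhiMap n ℓ θ α) ∧
      ∀ (c : L) (f g : Fin (ℓ * n) → L),
        PhiMap n ℓ θ α (c • f + g) = c • PhiMap n ℓ θ α f + PhiMap n ℓ θ α g := by
  have hθ : orderOf θ = n := by
    rw [orderOf_eq_card_of_forall_mem_zpowers hgen, IsGalois.card_aut_eq_finrank, hn]
  have hlin : ∀ (c : L) (f g : Fin (ℓ * n) → L),
      PhiMap n ℓ θ α (c • f + g) = c • PhiMap n ℓ θ α f + PhiMap n ℓ θ α g := by
    intro c f g
    funext j
    simp only [PhiMap, Pi.add_apply, Pi.smul_apply, smul_eq_mul, add_mul, add_smul,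
      Finset.sum_add_distrib, Finset.smul_sum, smul_smul, mul_assoc]
  refine ⟨?_, hlin⟩
  have hzero : PhiMap n ℓ θ α 0 = 0 := by
    funext j
    simp [PhiMap]
  let Φ : (Fin (ℓ * n) → L) →ₗ[L] (Fin ℓ → L →ₗ[K] L) :=
    { toFun := PhiMap n ℓ θ α
      map_add' := fun f g => by simpa using hlin 1 f g
      map_smul' := fun c f => by simpa [hzero] using hlin c f 0 }
  have hinj : Function.Injective Φ :=
    (injective_iff_map_eq_zero Φ).mpr fun f hf => PhiMap_eq_zero hθ hα0 hdist hf
  have : Module.Finite L (L →ₗ[K] L) := Module.Finite.of_restrictScalars_finite K L _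
  have hdim : Module.finrank L (Fin (ℓ * n) → L) = Module.finrank L (Fin ℓ → L →ₗ[K] L) := by
    rw [Module.finrank_fin_fun, Module.finrank_pi_fintype]
    simp [Module.finrank_linearMap_self, hn]
  exact ⟨hinj, (LinearMap.injective_iff_surjective_of_finrank_eq_finrank hdim).mp hinj⟩
end
end

section
/- Let ℓ ≥ 1 and let α ∈ L \ {0} satisfy N_{L/K}(α)^ℓ = 1. Given f = (f_0,…,f_{ℓn−1}) ∈ L^{ℓn}, define f^⊤ ∈ L^{ℓn} by (f^⊤)_j := θ^j(f_{(ℓn−j) mod ℓn}) for 0 ≤ j ≤ ℓn−1. Then for all a, b ∈ L: Tr_{L/K}(F_α(a)·b) = Tr_{L/K}(a·(F^⊤)_{α^{-1}}(b)), where F_α(β) := Σ_{i=0}^{ℓn−1} f_i·N_i(α)·θ^i(β) and (F^⊤)_{α^{-1}}(β) := Σ_{i=0}^{ℓn−1} (f^⊤)_i·N_i(α^{-1})·θ^i(β). That is, with respect to the trace bilinear form (x,y) ↦ Tr_{L/K}(x·y), the adjoint of F_α is (F^⊤)_{α^{-1}}. -/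
/-!
Put `m = ℓ * n`. Since `θ ^ n = 1`, the trace is `θ`-invariant, and the cocycle rule
`N_{i+j}(α) = N_i(α) * θ^i (N_j(α))` gives `N_m(α) = N_n(α)^ℓ = 1`. Let `j = (m - i) % m`, so that
`j + i` is `0` or `m`. Then `θ^j` is inverse to `θ^i`, and `N_j(α) * θ^j (N_i(α)) = 1`, that is
`θ^j (N_i(α)) = N_j(α⁻¹)`. Applying `θ^j` inside the trace to `f_i * N_i(α) * θ^i(a) * b` therefore
gives `a * θ^j(f_i) * N_j(α⁻¹) * θ^j(b)`, the `j`-th term of the right-hand side, and `i ↦ j` is an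
involution of the index set.
-/

noncomputable section

open Finset

variable {K L : Type*} [Field K] [Field L] [Algebra K L]

/-- The trace `Tr_{L/K}(x) = ∑_{i=0}^{n-1} θ^i(x)` (as an element of `L`). -/
def TrL (θ : L ≃ₐ[K] L) (n : ℕ) (x : L) : L :=
  ∑ i ∈ Finset.range n, (θ ^ i) x

theorem trunorm_add (θ : L ≃ₐ[K] L) (i j : ℕ) (y : L) :
    trunorm θ (i + j) y = trunorm θ i y * (θ ^ i) (trunorm θ j y) := by
  simp only [trunorm, Finset.prod_range_add, map_prod, pow_add, AlgEquiv.mul_apply]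

theorem trunorm_inv (θ : L ≃ₐ[K] L) (i : ℕ) (y : L) :
    trunorm θ i y⁻¹ = (trunorm θ i y)⁻¹ := by
  simp [trunorm]

theorem trunorm_mul (θ : L ≃ₐ[K] L) {n : ℕ} (hθ : θ ^ n = 1) (ℓ : ℕ) (y : L) :
    trunorm θ (ℓ * n) y = trunorm θ n y ^ ℓ := by
  induction ℓ with
  | zero => simp [trunorm]
  | succ k ih =>
    rw [Nat.succ_mul, Nat.add_comm, trunorm_add, ih, hθ, AlgEquiv.one_apply, pow_succ']

theorem TrL_apply (θ : L ≃ₐ[K] L) {n : ℕ} (hθ : θ ^ n = 1) (x : L) :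
    TrL θ n (θ x) = TrL θ n x := by
  have h : ∀ i, (θ ^ i) (θ x) = (θ ^ (i + 1)) x := fun i => by
    rw [pow_succ, AlgEquiv.mul_apply]
  have h1 := Finset.sum_range_succ (fun i => (θ ^ i) x) n
  rw [Finset.sum_range_succ', hθ, pow_zero] at h1
  simpa only [TrL, h] using add_right_cancel h1

theorem TrL_pow_apply (θ : L ≃ₐ[K] L) {n : ℕ} (hθ : θ ^ n = 1) (j : ℕ) (x : L) :
    TrL θ n ((θ ^ j) x) = TrL θ n x := by
  induction j with
  | zero => simp
  | succ k ih => rw [pow_succ', AlgEquiv.mul_apply, TrL_apply θ hθ, ih]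

theorem TrL_sum (θ : L ≃ₐ[K] L) (n : ℕ) (s : Finset ℕ) (g : ℕ → L) :
    TrL θ n (∑ i ∈ s, g i) = ∑ i ∈ s, TrL θ n (g i) := by
  simp only [TrL, map_sum]
  exact Finset.sum_comm

theorem neg_mod_add {m i : ℕ} (hi : i < m) : (m - i) % m + i = 0 ∨ (m - i) % m + i = m := by
  rcases Nat.eq_zero_or_pos i with rfl | h
  · simp
  · rw [Nat.mod_eq_of_lt (by omega)]
    omega

theorem neg_mod_neg_mod {m i : ℕ} (hi : i < m) : (m - (m - i) % m) % m = i := by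
  rcases Nat.eq_zero_or_pos i with rfl | h
  · simp
  · rw [Nat.mod_eq_of_lt (show m - i < m by omega), Nat.sub_sub_self hi.le, Nat.mod_eq_of_lt hi]

theorem stmt_7 (n ℓ : ℕ) [IsGalois K L] [FiniteDimensional K L]
    (hn : Module.finrank K L = n) (θ : L ≃ₐ[K] L)
    (hgen : ∀ σ : L ≃ₐ[K] L, σ ∈ Subgroup.zpowers θ)
    (hl : 1 ≤ ℓ) (α : L) (hα : α ≠ 0) (hαnorm : trunorm θ n α ^ ℓ = 1)
    (f : ℕ → L) :
    ∀ a b : L,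
      TrL θ n ((∑ i ∈ range (ℓ * n), f i * trunorm θ i α * (θ ^ i) a) * b)
        = TrL θ n (a * ∑ i ∈ range (ℓ * n),
            (θ ^ i) (f ((ℓ * n - i) % (ℓ * n))) * trunorm θ i α⁻¹ * (θ ^ i) b) := by
  intro a b
  have hθ : θ ^ n = 1 := by
    rw [← hn, ← IsGalois.card_aut_eq_finrank]
    exact pow_card_eq_one'
  have hN : trunorm θ (ℓ * n) α = 1 := by rw [trunorm_mul θ hθ, hαnorm]
  have hθm : θ ^ (ℓ * n) = 1 := by rw [Nat.mul_comm, pow_mul, hθ, one_pow]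
  rw [Finset.sum_mul, Finset.mul_sum, TrL_sum, TrL_sum]
  generalize ℓ * n = m at hN hθm ⊢
  have hlt : ∀ i ∈ range m, (m - i) % m ∈ range m := fun i hi =>
    Finset.mem_range.2 (Nat.mod_lt _ (Nat.zero_lt_of_lt (Finset.mem_range.1 hi)))
  refine Finset.sum_bij' (fun i _ => (m - i) % m) (fun i _ => (m - i) % m) hlt hlt
    (fun i hi => neg_mod_neg_mod (Finset.mem_range.1 hi))
    (fun i hi => neg_mod_neg_mod (Finset.mem_range.1 hi)) fun i hi => ?_
  have hi' := Finset.mem_range.1 hi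
  simp only [neg_mod_neg_mod hi']
  have hji := neg_mod_add hi'
  generalize (m - i) % m = j at hji ⊢
  have hpow : θ ^ (j + i) = 1 := by
    rcases hji with h | h <;> rw [h]
    exacts [pow_zero θ, hθm]
  have hnorm : trunorm θ (j + i) α = 1 := by
    rcases hji with h | h <;> rw [h]
    exacts [by simp [trunorm], hN]
  rw [trunorm_add] at hnorm
  have ha : (θ ^ j) ((θ ^ i) a) = a := by
    rw [← AlgEquiv.mul_apply, ← pow_add, hpow, AlgEquiv.one_apply]
  rw [← TrL_pow_apply θ hθ j, trunorm_inv, ← eq_inv_of_mul_eq_one_right hnorm]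
  simp only [map_mul, ha]
  congr 1
  ring
end
end

section
/- Let ℓ, n ≥ 1 and let F be a subfield of L such that L is finite-dimensional over F. Equip V = (L^n)^ℓ with the sum-rank weight wt(v) := Σ_{j=1}^{ℓ} dim_K(span_K of the n entries of the j-th block of v). Let C ⊆ V be an F-linear subspace and d ≥ 1 be such that every nonzero c ∈ C satisfies wt(c) ≥ d. Then dim_F(C) ≤ dim_F(L) · (ℓn − d + 1). -/
/-!
This is the Singleton bound. The `K`-span of a block has dimension at most the number of nonzero
entries of that block, so the sum-rank weight of `c` is at most its Hamming weight over the `ℓ * n`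
coordinates. Restricting codewords to a set `S` of `ℓ * n - d + 1` coordinates is therefore
injective on `C`: a nonzero codeword vanishing on `S` would have weight at most `#Sᶜ < d`. Hence
`C` embeds `F`-linearly into `S → L`.
-/

noncomputable section

open Finset

variable {K L : Type*} [Field K] [Field L] [Algebra K L]

/-- The rank weight of a block is at most the size of any set containing its support. -/
lemma finrank_span_range_le_card {n : ℕ} (v : Fin n → L) (T : Finset (Fin n))
    (hT : ∀ i, i ∉ T → v i = 0) :
    Module.finrank K ↥(Submodule.span K (Set.range v)) ≤ #T := by
  classical
  have hle : Submodule.span K (Set.range v) ≤ Submodule.span K (T.image v : Set L) := by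
    rw [Submodule.span_le]
    rintro _ ⟨i, rfl⟩
    by_cases hi : i ∈ T
    · exact Submodule.subset_span (by simpa using ⟨i, hi, rfl⟩)
    · simp [hT i hi]
  calc _ ≤ Module.finrank K ↥(Submodule.span K (T.image v : Set L)) :=
        Submodule.finrank_mono hle
    _ ≤ #(T.image v) := finrank_span_finset_le_card _
    _ ≤ #T := card_image_le

theorem stmt_8 (n ℓ : ℕ) (hn1 : 1 ≤ n) (hl1 : 1 ≤ ℓ)
    [IsGalois K L] [FiniteDimensional K L]
    (hn : Module.finrank K L = n) (θ : L ≃ₐ[K] L)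
    (hgen : ∀ σ : L ≃ₐ[K] L, σ ∈ Subgroup.zpowers θ)
    (F : Type*) [Field F] [Algebra F L] [FiniteDimensional F L]
    (C : Submodule F (Fin ℓ → Fin n → L)) (d : ℕ) (hd : 1 ≤ d)
    (hwt : ∀ c ∈ C, c ≠ (0 : Fin ℓ → Fin n → L) →
      d ≤ ∑ j : Fin ℓ, Module.finrank K ↥(Submodule.span K (Set.range (c j)))) :
    Module.finrank F ↥C ≤ Module.finrank F L * (ℓ * n - d + 1) := by
  classical
  have hN : 1 ≤ ℓ * n := Nat.mul_pos hl1 hn1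
  have hcard : #(univ : Finset (Fin ℓ × Fin n)) = ℓ * n := by simp
  -- For `d > ℓ * n` the subtraction truncates and `S` is a single coordinate; `#Sᶜ < d` persists.
  obtain ⟨S, -, hS⟩ := exists_subset_card_eq
    (show ℓ * n - d + 1 ≤ #(univ : Finset (Fin ℓ × Fin n)) by omega)
  have hSc : #Sᶜ < d := by
    rw [card_compl, ← card_univ, hcard, hS]
    omega
  let φ : (Fin ℓ → Fin n → L) →ₗ[F] (S → L) :=
    { toFun := fun c p => c p.1.1 p.1.2
      map_add' := fun _ _ => rfl
      map_smul' := fun _ _ => rfl }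
  have hinj : Function.Injective (φ.domRestrict C) := by
    rw [injective_iff_map_eq_zero]
    rintro ⟨c, hc⟩ h0
    by_contra hne
    have hc0 : c ≠ 0 := fun h => hne (Subtype.ext h)
    have hvan : ∀ p ∈ S, c p.1 p.2 = 0 := fun p hp => congrFun h0 ⟨p, hp⟩
    have hsum : ∑ j : Fin ℓ, Module.finrank K ↥(Submodule.span K (Set.range (c j))) ≤
        ∑ j : Fin ℓ, #{i | (j, i) ∈ Sᶜ} := by
      refine sum_le_sum fun j _ => finrank_span_range_le_card _ _ fun i hi => hvan (j, i) ?_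
      simpa using hi
    have hcount : ∑ j : Fin ℓ, #{i | (j, i) ∈ Sᶜ} = #Sᶜ := by
      simp_rw [card_filter]
      rw [← Fintype.sum_prod_type' (fun j i => if (j, i) ∈ Sᶜ then 1 else 0), ← card_filter]
      exact congrArg card (by ext; simp)
    have := hwt c hc hc0
    omega
  calc Module.finrank F ↥C ≤ Module.finrank F (S → L) :=
        LinearMap.finrank_le_finrank_of_injective hinj
    _ = Module.finrank F L * (ℓ * n - d + 1) := by
        rw [Module.finrank_pi_fintype]
        simp [hS, mul_comm]
end
end

section
/- Let K be a field and n, ℓ ≥ 1. Let φ be a K-linear map from the space of ℓ-tuples of n×n matrices over K to itself such that Σ_{j=1}^{ℓ} rank(φ(A)_j) = Σ_{j=1}^{ℓ} rank(A_j) for every tuple A = (A_1,…,A_ℓ). Then there exist a permutation π of {1,…,ℓ}, invertible matrices M_1,…,M_ℓ, N_1,…,N_ℓ ∈ GL_n(K), and v ∈ {0,1}^ℓ such that for every A and every j, φ(A)_j = M_j · A_{π^{-1}(j)}^{[v_j]} · N_j, where X^{[0]} := X and X^{[1]} := X^⊤ (the transpose). -/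
/-!
Tuples of weight at most one are rank-one matrices sitting in a single block. If two of them and
their sum all have weight at most one, then they sit in the same block. In a fixed block `i`,
`x₀ y₀ᵀ`, `x₀ yᵀ`, `x yᵀ` are consecutively related in this way, so the images of all rank-one
matrices of block `i` lie in one block `s i`; by linearity the whole block `i` is mapped into
block `s i` (`exists_block`). The map `s` is injective, since otherwise a tuple with two identity
blocks, of weight `2n`, would be mapped to a tuple supported on one block. Hence `φ` is a
permutation of blocks composed with a linear rank preserver on each block.

It remains to describe a linear rank preserver `f` of `n × n` matrices (`rank_preserver_form`).
Writing `f E_ii = u_i v_iᵀ`, one gets `f 1 = U V` where `U` has columns `u_i` and `V` has rows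
`v_i`; as `f 1` has rank `n`, both are invertible and `g = U⁻¹ f(·) V⁻¹` fixes every `E_ii`.
Vanishing of the `2 × 2` minors of `g E_ij`, `g (E_ij + E_ii)` and `g (E_ij + E_jj)` forces `g E_ij`
to be a multiple of `E_ij` or of `E_ji`, and minors of further rank-one combinations show that the
same alternative holds for all `i ≠ j`. So `g A` is the entrywise product of `A` (or `Aᵀ`) with the
matrix `g J`, `J` the all-ones matrix; this has rank one, `g J = a bᵀ`, so `g A = D_a A D_b` or
`D_a Aᵀ D_b` (`normalized_form`).
-/

noncomputable section

open Matrix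

/-! ### Matrices of rank at most one -/

theorem rank_le_one_factor {K : Type*} [Field K] {n : ℕ} {A : Matrix (Fin n) (Fin n) K}
    (h : A.rank ≤ 1) : ∃ u v : Fin n → K, A = vecMulVec u v := by
  rw [rank_eq_finrank_span_cols, finrank_le_one_iff] at h
  obtain ⟨⟨u, hu⟩, h⟩ := h
  have h' : ∀ j, ∃ c : K, ∀ i, A i j = c * u i := fun j => by
    obtain ⟨c, hc⟩ := h ⟨A.col j, Submodule.subset_span ⟨j, rfl⟩⟩
    refine ⟨c, fun i => ?_⟩
    have := congrFun (congrArg Subtype.val hc) i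
    simpa using this.symm
  choose v hv using h'
  refine ⟨u, v, ?_⟩
  ext i j
  rw [hv, vecMulVec_apply, mul_comm]

theorem isUnit_of_rank_eq {K : Type*} [Field K] {n : ℕ} {A : Matrix (Fin n) (Fin n) K}
    (h : n ≤ A.rank) : IsUnit A := by
  have h' : A.rank = n := le_antisymm (by simpa using A.rank_le_card_width) h
  rw [← linearIndependent_cols_iff_isUnit, linearIndependent_iff_card_eq_finrank_span,
    Set.finrank, ← rank_eq_finrank_span_cols, h', Fintype.card_fin]

theorem rank_eq_zero' {K : Type*} [Field K] {n : ℕ} {A : Matrix (Fin n) (Fin n) K}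
    (h : A.rank = 0) : A = 0 := by
  rw [rank_eq_finrank_span_cols, Submodule.finrank_eq_zero, Submodule.span_eq_bot] at h
  ext i j
  exact congrFun (h (A.col j) ⟨j, rfl⟩) i

theorem vecMulVec_minor {K : Type*} [Field K] {n : ℕ} {A : Matrix (Fin n) (Fin n) K}
    (h : ∃ u v : Fin n → K, A = vecMulVec u v) (a b c d : Fin n) :
    A a b * A c d = A a d * A c b := by
  obtain ⟨u, v, rfl⟩ := h
  simp only [vecMulVec_apply]; ring

theorem linear_apply_entry {K : Type*} [Field K] {n : ℕ}
    (g : Matrix (Fin n) (Fin n) K →ₗ[K] Matrix (Fin n) (Fin n) K)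
    (A : Matrix (Fin n) (Fin n) K) (i j : Fin n) :
    g A i j = ∑ p, ∑ q, A p q * g (single p q 1) i j := by
  conv_lhs => rw [matrix_eq_sum_single A]
  simp only [map_sum, Matrix.sum_apply]
  refine Finset.sum_congr rfl fun p _ => Finset.sum_congr rfl fun q _ => ?_
  have : single p q (A p q) = A p q • single p q (1 : K) := by simp [smul_single]
  rw [this, map_smul, Matrix.smul_apply, smul_eq_mul]

theorem single_vecMulVec_single_one {K : Type*} [Field K] {n : ℕ} (i j : Fin n) :
    vecMulVec (Pi.single i (1 : K)) (Pi.single j 1) = single i j 1 :=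
  (single_eq_single_vecMulVec_single i j).symm

/-! ### Rank preservers fixing the diagonal matrix units -/

section normalized
variable {K : Type*} [Field K] {n : ℕ}
    {g : Matrix (Fin n) (Fin n) K →ₗ[K] Matrix (Fin n) (Fin n) K}

/-- For `i ≠ j`, the matrix `g E_ij` is supported on the two positions `(i, j)` and `(j, i)`:
adding `E_ii` (resp. `E_jj`) keeps it of rank one, which kills all entries outside row and column
`i` (resp. `j`). -/
theorem offdiag_support
    (hd : ∀ i, g (single i i 1) = single i i 1)
    (hR : ∀ x y, ∃ u v, g (vecMulVec x y) = vecMulVec u v)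
    {i j : Fin n} (hij : i ≠ j) (c d : Fin n) (h1 : (c, d) ≠ (i, j)) (h2 : (c, d) ≠ (j, i)) :
    g (single i j 1) c d = 0 := by
  have e0 : single i j (1 : K) = vecMulVec (Pi.single i 1) (Pi.single j 1) := by
    rw [single_vecMulVec_single_one]
  have e1 : single i j (1 : K) + single i i 1
      = vecMulVec (Pi.single i 1) (Pi.single j 1 + Pi.single i 1) := by
    rw [vecMulVec_add]; simp only [single_vecMulVec_single_one]
  have e2 : single i j (1 : K) + single j j 1
      = vecMulVec (Pi.single i 1 + Pi.single j 1) (Pi.single j 1) := by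
    rw [add_vecMulVec]; simp only [single_vecMulVec_single_one]
  have m0 := vecMulVec_minor (e0 ▸ hR (Pi.single i 1) (Pi.single j 1))
  have m1 := vecMulVec_minor (e1 ▸ hR (Pi.single i 1) (Pi.single j 1 + Pi.single i 1))
  have m2 := vecMulVec_minor (e2 ▸ hR (Pi.single i 1 + Pi.single j 1) (Pi.single j 1))
  simp only [map_add, hd, Matrix.add_apply, single_apply] at m1 m2
  have key1 : c ≠ i → d ≠ i → g (single i j 1) c d = 0 := fun hc hd' => by
    have h := m1 i i c d
    have h' := m0 i i c d
    simp only [hc.symm, hd'.symm, and_self, and_false, false_and, if_true, if_false, add_zero] at h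
    linear_combination h - h'
  have key2 : c ≠ j → d ≠ j → g (single i j 1) c d = 0 := fun hc hd' => by
    have h := m2 j j c d
    have h' := m0 j j c d
    simp only [hc.symm, hd'.symm, and_self, and_false, false_and, if_true, if_false, add_zero] at h
    linear_combination h - h'
  grind

/-- A linear map that fixes every `E_ii`, kills no `E_ij` and preserves rank at most one is
`A ↦ D_a A D_b` or `A ↦ D_a Aᵀ D_b` with invertible diagonal matrices, here written entrywise. -/
theorem normalized_form
    (hd : ∀ i, g (single i i 1) = single i i 1)
    (hne : ∀ i j, g (single i j 1) ≠ 0)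
    (hR : ∀ x y, ∃ u v, g (vecMulVec x y) = vecMulVec u v) :
    ∃ a b : Fin n → K, (∀ i, a i ≠ 0) ∧ (∀ i, b i ≠ 0) ∧
      ((∀ A i j, g A i j = a i * A i j * b j) ∨ (∀ A i j, g A i j = a i * A j i * b j)) := by
  have hs := @offdiag_support K _ n g hd hR
  -- `vecMulVec 1 1` is the all-ones matrix; its image records all the coefficients of `g`.
  obtain ⟨a, b, hab⟩ := hR 1 1
  have hone : ∀ i j, i ≠ j → g (single i j 1) i j ≠ 0 ∨ g (single i j 1) j i ≠ 0 := by
    intro i j hij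
    by_contra! h
    refine hne i j ?_
    ext c d
    by_cases h1 : (c, d) = (i, j)
    · grind [Matrix.zero_apply]
    by_cases h2 : (c, d) = (j, i)
    · grind [Matrix.zero_apply]
    exact hs hij c d h1 h2
  have hR' : ∀ i j, ∃ u v, g (single i j 1) = vecMulVec u v := fun i j => by
    have := hR (Pi.single i 1) (Pi.single j 1)
    rwa [single_vecMulVec_single_one] at this
  have hmix : ∀ i j, i ≠ j → g (single i j 1) i j = 0 ∨ g (single i j 1) j i = 0 := by
    intro i j hij
    have := vecMulVec_minor (hR' i j) i j j i
    rw [hs hij i i (by clear * - hij; grind) (by clear * - hij; grind), zero_mul] at this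
    exact mul_eq_zero.1 this
  -- If `g` is straight on `E_ij`, then it is not transposing on `E_ik`, on `E_kj`, or on `E_ji`;
  -- chaining these three relations reaches every off-diagonal position.
  have hrow : ∀ i j k, i ≠ j → i ≠ k → g (single i j 1) i j ≠ 0 → g (single i k 1) k i = 0 := by
    intro i j k hij hik h
    by_cases hjk : j = k
    · subst hjk; exact (hmix i j hij).resolve_left h
    have e : single i j (1 : K) + single i k 1
        = vecMulVec (Pi.single i 1) (Pi.single j 1 + Pi.single k 1) := by
      rw [vecMulVec_add]; simp only [single_vecMulVec_single_one]
    have m := vecMulVec_minor (e ▸ hR (Pi.single i 1) (Pi.single j 1 + Pi.single k 1)) i j k i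
    simp only [map_add, Matrix.add_apply] at m
    rw [hs hij k i (by clear * - hij hik hjk; grind) (by clear * - hij hik hjk; grind), hs hij i i (by clear * - hij hik hjk; grind) (by clear * - hij hik hjk; grind),
      hs hik i j (by clear * - hij hik hjk; grind) (by clear * - hij hik hjk; grind), hs hik i i (by clear * - hij hik hjk; grind) (by clear * - hij hik hjk; grind)] at m
    grind
  have hcol : ∀ i j k, i ≠ j → k ≠ j → g (single i j 1) i j ≠ 0 → g (single k j 1) j k = 0 := by
    intro i j k hij hkj h
    by_cases hik : i = k
    · subst hik; exact (hmix i j hij).resolve_left h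
    have e : single i j (1 : K) + single k j 1
        = vecMulVec (Pi.single i 1 + Pi.single k 1) (Pi.single j 1) := by
      rw [add_vecMulVec]; simp only [single_vecMulVec_single_one]
    have m := vecMulVec_minor (e ▸ hR (Pi.single i 1 + Pi.single k 1) (Pi.single j 1)) i j j k
    simp only [map_add, Matrix.add_apply] at m
    rw [hs hij j k (by clear * - hij hkj hik; grind) (by clear * - hij hkj hik; grind), hs hij j j (by clear * - hij hkj hik; grind) (by clear * - hij hkj hik; grind),
      hs hkj i j (by clear * - hij hkj hik; grind) (by clear * - hij hkj hik; grind), hs hkj j j (by clear * - hij hkj hik; grind) (by clear * - hij hkj hik; grind)] at m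
    grind
  have hswap : ∀ i j, i ≠ j → g (single i j 1) i j ≠ 0 → g (single j i 1) i j = 0 := by
    intro i j hij h
    by_contra h'
    have e : single i i (1 : K) + single i j 1 + (single j i 1 + single j j 1)
        = vecMulVec (Pi.single i 1 + Pi.single j 1) (Pi.single i 1 + Pi.single j 1) := by
      rw [add_vecMulVec, vecMulVec_add, vecMulVec_add]; simp only [single_vecMulVec_single_one]
    have m := vecMulVec_minor
      (e ▸ hR (Pi.single i 1 + Pi.single j 1) (Pi.single i 1 + Pi.single j 1)) i i j j
    simp only [map_add, Matrix.add_apply, hd] at m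
    have h1 := (hmix i j hij).resolve_left h
    have h2 := (hmix j i hij.symm).resolve_right h'
    rw [hs hij i i (by clear * - hij; grind) (by clear * - hij; grind), hs hij j j (by clear * - hij; grind) (by clear * - hij; grind),
      hs hij.symm i i (by clear * - hij; grind) (by clear * - hij; grind), hs hij.symm j j (by clear * - hij; grind) (by clear * - hij; grind), h1, h2] at m
    simp [hij, hij.symm] at m
  have hall : ∀ i j k l, i ≠ j → k ≠ l → g (single i j 1) i j ≠ 0 → g (single k l 1) l k = 0 := by
    intro i j k l hij hkl h
    have row : ∀ i j k, i ≠ j → i ≠ k → g (single i j 1) i j ≠ 0 → g (single i k 1) i k ≠ 0 :=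
      fun i j k hij hik h => by
        have := hrow i j k hij hik h
        have := hone i k hik
        tauto
    have col : ∀ i j k, i ≠ j → k ≠ j → g (single i j 1) i j ≠ 0 → g (single k j 1) k j ≠ 0 :=
      fun i j k hij hik h => by
        have := hcol i j k hij hik h
        have := hone k j hik
        tauto
    by_cases hli : l = i
    · subst hli
      by_cases hkj : k = j
      · subst hkj
        exact hswap _ _ hij h
      · exact hrow k j l hkj hkl (col l j k hij hkj h)
    · exact hcol i l k (Ne.symm hli) hkl (row i j l hij (Ne.symm hli) h)
  have hdich : (∀ p q i j, (p, q) ≠ (i, j) → g (single p q 1) i j = 0) ∨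
      (∀ p q i j, (q, p) ≠ (i, j) → g (single p q 1) i j = 0) := by
    by_cases hex : ∃ i j, i ≠ j ∧ g (single i j 1) i j ≠ 0
    · left
      obtain ⟨i, j, hij, h⟩ := hex
      intro p q c d hne
      by_cases hpq : p = q
      · subst hpq
        rw [hd, single_apply, if_neg (by grind)]
      by_cases h2 : (c, d) = (q, p)
      · obtain ⟨rfl, rfl⟩ := Prod.mk.inj h2
        exact hall i j d c hij hpq h
      · exact hs hpq c d hne.symm h2
    · right
      push Not at hex
      intro p q c d hne
      by_cases hpq : p = q
      · subst hpq
        rw [hd, single_apply, if_neg (by grind)]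
      by_cases h2 : (c, d) = (p, q)
      · obtain ⟨rfl, rfl⟩ := Prod.mk.inj h2
        exact hex _ _ hpq
      · exact hs hpq c d h2 hne.symm
  have hJ : ∀ i j, g (vecMulVec 1 1) i j = a i * b j := fun i j => by rw [hab, vecMulVec_apply]
  have hform : (∀ A i j, g A i j = a i * A i j * b j) ∨
      (∀ A i j, g A i j = a i * A j i * b j) := by
    rcases hdich with h | h
    · left
      have hA : ∀ A i j, g A i j = A i j * g (single i j 1) i j := fun A i j => by
        rw [linear_apply_entry, Finset.sum_eq_single i, Finset.sum_eq_single j]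
        · intro q _ hq; rw [h _ _ _ _ (by grind), mul_zero]
        · simp
        · intro p _ hp
          exact Finset.sum_eq_zero fun q _ => by rw [h _ _ _ _ (by grind), mul_zero]
        · simp
      intro A i j
      have := hA (vecMulVec 1 1) i j
      rw [hJ] at this
      rw [hA]
      simp [vecMulVec_apply] at this
      rw [← this]; ring
    · right
      have hA : ∀ A i j, g A i j = A j i * g (single j i 1) i j := fun A i j => by
        rw [linear_apply_entry, Finset.sum_eq_single j, Finset.sum_eq_single i]
        · intro q _ hq; rw [h _ _ _ _ (by grind), mul_zero]
        · simp
        · intro p _ hp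
          exact Finset.sum_eq_zero fun q _ => by rw [h _ _ _ _ (by grind), mul_zero]
        · simp
      intro A i j
      have := hA (vecMulVec 1 1) i j
      rw [hJ] at this
      rw [hA]
      simp [vecMulVec_apply] at this
      rw [← this]; ring
  have hdiag : ∀ i, a i * b i = 1 := fun i => by
    rcases hform with h | h <;>
    · have := h (single i i 1) i i
      rw [hd] at this
      simpa using this.symm
  exact ⟨a, b, fun i h => by simpa [h] using hdiag i, fun i h => by simpa [h] using hdiag i, hform⟩

end normalized

/-! ### Rank preservers of a matrix space -/

theorem rank_preserver_form {K : Type*} [Field K] {n : ℕ}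
    (f : Matrix (Fin n) (Fin n) K →ₗ[K] Matrix (Fin n) (Fin n) K)
    (hf : ∀ A, (f A).rank = A.rank) :
    ∃ (M N : Matrix (Fin n) (Fin n) K) (v : Bool), IsUnit M ∧ IsUnit N ∧
      ∀ A, f A = M * (if v then Aᵀ else A) * N := by
  have hfR : ∀ x y, ∃ u v, f (vecMulVec x y) = vecMulVec u v := fun x y =>
    rank_le_one_factor ((hf _).trans_le (rank_vecMulVec_le x y))
  have hinj : ∀ A, f A = 0 → A = 0 := fun A h => rank_eq_zero' (by rw [← hf, h, rank_zero])
  have hfd : ∀ i, ∃ u v, f (single i i 1) = vecMulVec u v := fun i => by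
    have := hfR (Pi.single i 1) (Pi.single i 1)
    rwa [single_vecMulVec_single_one] at this
  choose u v huv using hfd
  set U : Matrix (Fin n) (Fin n) K := of fun i j => u j i with hU
  set V : Matrix (Fin n) (Fin n) K := of v with hV
  have h1 : f 1 = U * V := by
    have : (1 : Matrix (Fin n) (Fin n) K) = ∑ i, single i i 1 := by
      ext a b
      simp [Matrix.sum_apply, single_apply, Matrix.one_apply, ite_and]
    rw [this, map_sum]
    ext a b
    simp [Matrix.sum_apply, huv, vecMulVec_apply, Matrix.mul_apply, hU, hV]
  have hr : (U * V).rank = n := by rw [← h1, hf, rank_one, Fintype.card_fin]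
  have hUu : IsUnit U := isUnit_of_rank_eq (hr.ge.trans <| rank_mul_le_left U V)
  have hVu : IsUnit V := isUnit_of_rank_eq (hr.ge.trans <| rank_mul_le_right U V)
  have hUd := (isUnit_iff_isUnit_det U).1 hUu
  have hVd := (isUnit_iff_isUnit_det V).1 hVu
  let g : Matrix (Fin n) (Fin n) K →ₗ[K] Matrix (Fin n) (Fin n) K :=
    (LinearMap.mulRight K V⁻¹) ∘ₗ (LinearMap.mulLeft K U⁻¹) ∘ₗ f
  have hg : ∀ A, g A = U⁻¹ * f A * V⁻¹ := fun A => rfl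
  have hfg : ∀ A, f A = U * g A * V := fun A => by
    rw [hg]
    simp only [Matrix.mul_assoc]
    rw [nonsing_inv_mul _ hVd, Matrix.mul_one, mul_nonsing_inv_cancel_left _ _ hUd]
  have hgd : ∀ i, g (single i i 1) = single i i 1 := fun i => by
    have : f (single i i 1) = U * single i i 1 * V := by
      rw [huv]
      ext a b
      rw [single_eq_single_vecMulVec_single, Matrix.mul_vecMulVec, Matrix.vecMulVec_mul]
      simp [vecMulVec_apply, hU, hV]
    rw [hg, this]
    simp only [Matrix.mul_assoc]
    rw [mul_nonsing_inv _ hVd, Matrix.mul_one, nonsing_inv_mul_cancel_left _ _ hUd]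
  have hgne : ∀ i j, g (single i j 1) ≠ 0 := fun i j h => by
    have := hinj (single i j 1) (by rw [hfg, h]; simp)
    have := congrFun (congrFun this i) j
    simp at this
  have hgR : ∀ x y, ∃ u v, g (vecMulVec x y) = vecMulVec u v := fun x y => by
    obtain ⟨p, q, h⟩ := hfR x y
    rw [hg, h, Matrix.mul_vecMulVec, Matrix.vecMulVec_mul]
    exact ⟨_, _, rfl⟩
  obtain ⟨a, b, ha, hb, h⟩ := normalized_form hgd hgne hgR
  have hau : IsUnit (diagonal a) := by
    rw [isUnit_iff_isUnit_det, det_diagonal]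
    exact (Finset.prod_ne_zero_iff.2 fun i _ => ha i).isUnit
  have hbu : IsUnit (diagonal b) := by
    rw [isUnit_iff_isUnit_det, det_diagonal]
    exact (Finset.prod_ne_zero_iff.2 fun i _ => hb i).isUnit
  rcases h with h | h
  · refine ⟨U * diagonal a, diagonal b * V, false, hUu.mul hau, hbu.mul hVu, fun A => ?_⟩
    have : g A = diagonal a * A * diagonal b := by
      ext i j; simp [h]
    rw [hfg, this]; simp [Matrix.mul_assoc]
  · refine ⟨U * diagonal a, diagonal b * V, true, hUu.mul hau, hbu.mul hVu, fun A => ?_⟩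
    have : g A = diagonal a * Aᵀ * diagonal b := by
      ext i j; simp [h]
    rw [hfg, this]; simp [Matrix.mul_assoc]

/-! ### Images of the blocks -/

section blocks
variable {K : Type*} [Field K] {n ℓ : ℕ}

theorem one_block {T : Fin ℓ → Matrix (Fin n) (Fin n) K}
    (hT : ∑ j, (T j).rank ≤ 1) {j k : Fin ℓ} (hjk : j ≠ k) (hj : T j ≠ 0) : T k = 0 := by
  have hj' : (T j).rank ≠ 0 := fun h => hj (rank_eq_zero' h)
  have h := Finset.sum_le_sum_of_subset (f := fun i => (T i).rank) (Finset.subset_univ {j, k})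
  rw [Finset.sum_pair hjk] at h
  exact rank_eq_zero' (by omega)

/-- If `S`, `S + T` have weight at most one and `T ≠ 0`, then `T` is nonzero in every block where
`S` is. -/
theorem same_block {S T : Fin ℓ → Matrix (Fin n) (Fin n) K}
    (hS : ∑ j, (S j).rank ≤ 1) (hST : ∑ j, ((S + T) j).rank ≤ 1)
    {j : Fin ℓ} (hj : S j ≠ 0) (hT0 : T ≠ 0) : T j ≠ 0 := by
  intro hTj
  obtain ⟨k, hk⟩ := Function.ne_iff.1 hT0
  have hjk : j ≠ k := fun h => hk (h ▸ hTj)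
  have hSk := one_block hS hjk hj
  have := one_block hST hjk (by simpa [hTj] using hj)
  exact hk (by simpa [hSk] using this)

theorem sum_rank_single (i : Fin ℓ) (A : Matrix (Fin n) (Fin n) K) :
    ∑ j, ((Pi.single i A : Fin ℓ → Matrix (Fin n) (Fin n) K) j).rank = A.rank := by
  rw [Finset.sum_eq_single i]
  · simp
  · intro j _ hj; rw [Pi.single_eq_of_ne hj, rank_zero]
  · simp

theorem exists_block (hn : 1 ≤ n)
    (φ : (Fin ℓ → Matrix (Fin n) (Fin n) K) →ₗ[K] (Fin ℓ → Matrix (Fin n) (Fin n) K))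
    (hiso : ∀ A : Fin ℓ → Matrix (Fin n) (Fin n) K,
      ∑ j : Fin ℓ, (φ A j).rank = ∑ j : Fin ℓ, (A j).rank) (i : Fin ℓ) :
    ∃ s : Fin ℓ, ∀ A, ∀ j, j ≠ s → φ (Pi.single i A) j = 0 := by
  have hw : ∀ x y : Fin n → K, ∑ j, (φ (Pi.single i (vecMulVec x y)) j).rank ≤ 1 := fun x y => by
    rw [hiso, sum_rank_single]; exact rank_vecMulVec_le x y
  have hinj : ∀ A, A ≠ 0 → φ (Pi.single i A) ≠ 0 := fun A hA h => by
    refine hA (rank_eq_zero' ?_)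
    rw [← sum_rank_single i A, ← hiso, h]
    simp
  have hne : ∀ p q : Fin n, φ (Pi.single i (vecMulVec (Pi.single p 1) (Pi.single q 1))) ≠ 0 :=
    fun p q => hinj _ fun h => by
      have := congrFun (congrFun h p) q
      simp [vecMulVec_apply] at this
  let o : Fin n := ⟨0, hn⟩
  obtain ⟨s, hs⟩ := Function.ne_iff.1 (hne o o)
  have hs' : ∀ p q, φ (Pi.single i (vecMulVec (Pi.single p 1) (Pi.single q 1))) s ≠ 0 := by
    intro p q
    have h1 : φ (Pi.single i (vecMulVec (Pi.single o 1) (Pi.single q 1))) s ≠ 0 := by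
      refine same_block (hw _ _) ?_ hs (hne o q)
      rw [← map_add, ← Pi.single_add, ← vecMulVec_add]
      exact hw _ _
    refine same_block (hw _ _) ?_ h1 (hne p q)
    rw [← map_add, ← Pi.single_add, ← add_vecMulVec]
    exact hw _ _
  refine ⟨s, fun A j hj => ?_⟩
  let L : Matrix (Fin n) (Fin n) K →ₗ[K] Matrix (Fin n) (Fin n) K :=
    LinearMap.proj j ∘ₗ φ ∘ₗ LinearMap.single K (fun _ => Matrix (Fin n) (Fin n) K) i
  have hL : L = 0 := by
    refine Matrix.ext_linearMap (R := K) fun p q => LinearMap.ext_ring ?_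
    have := one_block (hw _ _) hj.symm (hs' p q)
    rw [single_vecMulVec_single_one] at this
    simpa [L] using this
  exact LinearMap.congr_fun hL A

end blocks

theorem stmt_10 (K : Type*) [Field K] (n ℓ : ℕ) (hn : 1 ≤ n) (hl : 1 ≤ ℓ)
    (φ : (Fin ℓ → Matrix (Fin n) (Fin n) K) →ₗ[K] (Fin ℓ → Matrix (Fin n) (Fin n) K))
    (hiso : ∀ A : Fin ℓ → Matrix (Fin n) (Fin n) K,
      ∑ j : Fin ℓ, (φ A j).rank = ∑ j : Fin ℓ, (A j).rank) :
    ∃ (π : Equiv.Perm (Fin ℓ)) (M N : Fin ℓ → Matrix (Fin n) (Fin n) K)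
      (v : Fin ℓ → Bool),
      (∀ j, IsUnit (M j)) ∧ (∀ j, IsUnit (N j)) ∧
      ∀ (A : Fin ℓ → Matrix (Fin n) (Fin n) K) (j : Fin ℓ),
        φ A j = M j * (if v j then (A (π⁻¹ j))ᵀ else A (π⁻¹ j)) * N j := by
  choose s hs using exists_block hn φ hiso
  have hsinj : Function.Injective s := by
    intro i k hik
    by_contra hne
    have h := hiso (Pi.single i 1 + Pi.single k 1)
    -- The image is supported on block `s i`, so it has weight at most `n`, yet the tuple has
    -- weight `2n`.
    have hL : ∑ j, (φ (Pi.single i 1 + Pi.single k 1) j).rank ≤ n := by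
      rw [Finset.sum_eq_single (s i)]
      · exact (rank_le_card_width _).trans_eq (Fintype.card_fin n)
      · intro j _ hj
        rw [map_add, Pi.add_apply, hs i _ j hj, hs k _ j (hik ▸ hj), add_zero, rank_zero]
      · simp
    have hRt := Finset.sum_le_sum_of_subset (Finset.subset_univ {i, k})
      (f := fun j => ((Pi.single i 1 + Pi.single k 1 : Fin ℓ → Matrix (Fin n) (Fin n) K) j).rank)
    rw [Finset.sum_pair hne, ← h] at hRt
    simp only [Pi.add_apply, Pi.single_eq_same, Pi.single_eq_of_ne hne,
      Pi.single_eq_of_ne (Ne.symm hne), add_zero, zero_add, rank_one, Fintype.card_fin] at hRt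
    have := hRt.trans hL
    omega
  let π : Equiv.Perm (Fin ℓ) := Equiv.ofBijective s (Finite.injective_iff_bijective.1 hsinj)
  have hπ : ∀ j, s (π⁻¹ j) = j := fun j => π.apply_symm_apply j
  let f : Fin ℓ → Matrix (Fin n) (Fin n) K →ₗ[K] Matrix (Fin n) (Fin n) K := fun j =>
    LinearMap.proj j ∘ₗ φ ∘ₗ LinearMap.single K (fun _ => Matrix (Fin n) (Fin n) K) (π⁻¹ j)
  have hfa : ∀ j A, f j A = φ (Pi.single (π⁻¹ j) A) j := fun j A => rfl
  have hf : ∀ j A, (f j A).rank = A.rank := fun j A => by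
    rw [← sum_rank_single (π⁻¹ j) A, ← hiso, hfa, Finset.sum_eq_single j]
    · intro k _ hk
      rw [hs _ _ k (by rwa [hπ]), rank_zero]
    · simp
  choose M N v hM hN hMN using fun j => rank_preserver_form (f j) (hf j)
  refine ⟨π, M, N, v, hM, hN, fun A j => ?_⟩
  rw [← hMN, hfa]
  conv_lhs => rw [← Finset.univ_sum_single A]
  rw [map_sum, Finset.sum_apply, Finset.sum_eq_single (π⁻¹ j)]
  · intro i _ hi
    refine hs _ _ j fun h => hi ?_
    apply hsinj; rw [hπ, h]
  · simp
end
end
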